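/- Let G be an edge-colored graph, let P = u_0 u_1 … u_t be a rainbow path of maximum length t among all rainbow paths in G, with x = u_0 and y = u_t, and suppose G contains no rainbow cycle of length t+1. Let A_2 be the set of vertices u_i ∈ M_x ∩ T_y for which there exists a vertex w(u_i) on P with w(u_i) ∉ M_x such that (y, w(u_i)) is an edge of G with color(y, w(u_i)) = color(u_i, u_{i+1}), and let S_y = {v ∈ V(P) \ (M_x ∪ {y, u_{t−1}}) : (y, v) ∈ E(G) and color(y, v) ∈ U}. Then |S_y| ≥ |A_2|. -/

import Mathlib

/-!
Send each index `i` in `A₂` to a chosen witness `w(u_i)`. The color of `(y, w(u_i))` is that of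
`u_i u_{i+1}`, an edge of the rainbow path, so it lies in `U` and determines `i`; hence the map is
injective. The witness differs from `u_{t-1}`, since otherwise `u_i u_{i+1}` and `u_{t-1} u_t` would
share a color, forcing `i = t - 1`, whereas `i ≤ t - 2` by membership in `T_y`. So the map lands
in `S_y`. The ingredients are `color_mem` and `color_inj`.
-/

open SimpleGraph

/-- The color degree of a vertex `v`: the number of distinct colors appearing on
edges incident to `v`. -/
noncomputable def colorDegree {V : Type*} (G : SimpleGraph V) (c : Sym2 V → ℕ) (v : V) : ℕ :=
  (c '' G.incidenceSet v).ncard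

/-- A rainbow path: a path all of whose edges have pairwise distinct colors. -/
def IsRainbowPath {V : Type*} (G : SimpleGraph V) (c : Sym2 V → ℕ) {u v : V}
    (p : G.Walk u v) : Prop :=
  p.IsPath ∧ (p.edges.map c).Nodup

/-- A rainbow cycle: a cycle all of whose edges have pairwise distinct colors. -/
def IsRainbowCycle {V : Type*} (G : SimpleGraph V) (c : Sym2 V → ℕ) {u : V}
    (p : G.Walk u u) : Prop :=
  p.IsCycle ∧ (p.edges.map c).Nodup

/-- `Tx`: the set of indices `i` with `2 ≤ i ≤ t-1` such that `(x, u_i)` is an edge whose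
color does not appear on `P` (i.e. lies in `Uᶜ`), where `P = u_0 u_1 … u_t` with `x = u_0`. -/
def Tx {V : Type*} (G : SimpleGraph V) (c : Sym2 V → ℕ) {x y : V} (p : G.Walk x y) : Set ℕ :=
  {i : ℕ | 2 ≤ i ∧ i ≤ p.length - 1 ∧ G.Adj x (p.getVert i) ∧
    c s(x, p.getVert i) ∉ p.edges.map c}

/-- `Ty`: the set of indices `i` with `1 ≤ i ≤ t-2` such that `(y, u_i)` is an edge whose
color does not appear on `P` (i.e. lies in `Uᶜ`), where `P = u_0 u_1 … u_t` with `y = u_t`. -/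
def Ty {V : Type*} (G : SimpleGraph V) (c : Sym2 V → ℕ) {x y : V} (p : G.Walk x y) : Set ℕ :=
  {i : ℕ | 1 ≤ i ∧ i ≤ p.length - 2 ∧ G.Adj y (p.getVert i) ∧
    c s(y, p.getVert i) ∉ p.edges.map c}

/-- `Mx`: the set of indices `j` such that `j + 1 ∈ Tx`. -/
def Mx {V : Type*} (G : SimpleGraph V) (c : Sym2 V → ℕ) {x y : V} (p : G.Walk x y) : Set ℕ :=
  {j : ℕ | j + 1 ∈ Tx G c p}

/-- The `i`-th entry in the list of colors of a walk is the color of `u_i u_{i+1}`. -/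
lemma colors_getElem {V : Type*} {G : SimpleGraph V} (c : Sym2 V → ℕ) {x y : V}
    (p : G.Walk x y) {i : ℕ} (hi : i < (p.edges.map c).length) :
    (p.edges.map c)[i] = c s(p.getVert i, p.getVert (i + 1)) := by
  induction p generalizing i with
  | nil => simp at hi
  | cons h q ih =>
    cases i with
    | zero => simp
    | succ i =>
      have := ih (i := i) (by simpa using hi)
      simp only [List.getElem_map] at this
      simpa using this

lemma color_mem {V : Type*} {G : SimpleGraph V} (c : Sym2 V → ℕ) {x y : V}
    (p : G.Walk x y) {i : ℕ} (hi : i < p.length) :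
    c s(p.getVert i, p.getVert (i + 1)) ∈ p.edges.map c := by
  have hi' : i < (p.edges.map c).length := by simpa using hi
  rw [← colors_getElem c p hi']
  exact List.getElem_mem hi'

lemma color_inj {V : Type*} {G : SimpleGraph V} {c : Sym2 V → ℕ} {x y : V}
    {p : G.Walk x y} (hp : (p.edges.map c).Nodup) {i j : ℕ} (hi : i < p.length)
    (hj : j < p.length)
    (h : c s(p.getVert i, p.getVert (i + 1)) = c s(p.getVert j, p.getVert (j + 1))) :
    i = j := by
  have hi' : i < (p.edges.map c).length := by simpa using hi
  have hj' : j < (p.edges.map c).length := by simpa using hj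
  rw [← colors_getElem c p hi', ← colors_getElem c p hj'] at h
  exact (hp.getElem_inj_iff).1 h

theorem card_Sy_ge_card_A2 {V : Type*} [Fintype V]
    (G : SimpleGraph V) (c : Sym2 V → ℕ)
    {x y : V} (p : G.Walk x y) (hp : IsRainbowPath G c p)
    (hmax : ∀ (a b : V) (q : G.Walk a b), IsRainbowPath G c q → q.length ≤ p.length)
    (hnocyc : ∀ (u : V) (q : G.Walk u u), IsRainbowCycle G c q → q.length ≠ p.length + 1) :
    ({i : ℕ | i ∈ Mx G c p ∩ Ty G c p ∧
        ∃ w ∈ p.support, w ∉ p.getVert '' Mx G c p ∧ G.Adj y w ∧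
          c s(y, w) = c s(p.getVert i, p.getVert (i + 1))}).ncard ≤
      ({v : V | v ∈ p.support ∧ v ∉ p.getVert '' Mx G c p ∧ v ≠ y ∧
          v ≠ p.getVert (p.length - 1) ∧ G.Adj y v ∧
          c s(y, v) ∈ p.edges.map c}).ncard := by
  classical
  refine Set.ncard_le_ncard_of_injOn
    (fun i => if h : ∃ w ∈ p.support, w ∉ p.getVert '' Mx G c p ∧ G.Adj y w ∧
          c s(y, w) = c s(p.getVert i, p.getVert (i + 1)) then h.choose else y) ?_ ?_
  · rintro i ⟨⟨-, hi1, hi2, -⟩, h⟩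
    simp only [dif_pos h]
    obtain ⟨hs, hM, hadj, hc⟩ := h.choose_spec
    refine ⟨hs, hM, hadj.ne', ?_, hadj, ?_⟩
    rotate_left
    · rw [hc]
      exact color_mem c p (by omega)
    intro hw
    -- If `w = u_{t-1}`, then the edges `u_i u_{i+1}` and `u_{t-1} u_t` share a color, so `i = t-1`.
    have key := color_inj hp.2 (i := i) (j := p.length - 1) (by omega) (by omega) (by
      rw [← hc, hw, show p.length - 1 + 1 = p.length by omega, p.getVert_length, Sym2.eq_swap])
    omega
  · rintro i ⟨⟨-, hi1, hi2, -⟩, h⟩ j ⟨⟨-, hj1, hj2, -⟩, h'⟩ hij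
    simp only [dif_pos h, dif_pos h'] at hij
    refine color_inj hp.2 (by omega) (by omega) ?_
    rw [← h.choose_spec.2.2.2, ← h'.choose_spec.2.2.2, hij]
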